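/- Let B be a nonempty compact metric space, f : B → B a continuous minimal map, S¹ = ℝ/ℤ the circle, and F : B × S¹ → B × S¹ a continuous map of the form F(b, y) = (f(b), g(b, y)) with g : B × S¹ → S¹ continuous. If M is a minimal set of F, then either M is nowhere dense in B × S¹ or M = B × S¹. -/

import Mathlib

open Set Topology

section Minimal

variable {X : Type*} [TopologicalSpace X] {T : X → X} {M : Set X}

/-- The visiting time to an open set meeting a compact minimal set is bounded. -/
theorem exists_forall_exists_iterate_mem (hT : Continuous T) (hM : IsCompact M)
    (hmin : ∀ p ∈ M, M ⊆ closure (range fun n => T^[n] p)) {O : Set X} (hO : IsOpen O)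
    (hne : (M ∩ O).Nonempty) : ∃ N : ℕ, ∀ p ∈ M, ∃ n ≤ N, T^[n] p ∈ O := by
  obtain ⟨x, hxM, hxO⟩ := hne
  have hcover : M ⊆ ⋃ n : ℕ, T^[n] ⁻¹' O := by
    intro p hp
    obtain ⟨_, hy, n, rfl⟩ := mem_closure_iff.1 (hmin p hp hxM) O hO hxO
    exact mem_iUnion.2 ⟨n, hy⟩
  obtain ⟨t, ht⟩ := hM.elim_finite_subcover _ (fun n => hO.preimage (hT.iterate n)) hcover
  refine ⟨t.sup id, fun p hp => ?_⟩
  obtain ⟨n, hn, hpn⟩ := mem_iUnion₂.1 (ht hp)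
  exact ⟨n, Finset.le_sup (f := id) hn, hpn⟩

/-- A minimal map is irreducible: every open set meeting the minimal set contains
a full fibre of the map. -/
theorem exists_fibre_subset_of_minimal (hT : Continuous T) (hM : IsCompact M)
    (hmin : ∀ p ∈ M, M ⊆ closure (range fun n => T^[n] p)) {W : Set X} (hW : IsOpen W)
    (hne : (M ∩ W).Nonempty) : ∃ z ∈ M, ∀ p ∈ M, T p = z → p ∈ W := by
  by_contra! h
  obtain ⟨N, hN⟩ := exists_forall_exists_iterate_mem hT hM hmin hW hne
  have key : ∀ n : ℕ, ∃ p ∈ M, ∀ i ≤ n, T^[i] p ∉ W := by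
    intro n
    induction n with
    | zero =>
      obtain ⟨x, hx, -⟩ := hne
      obtain ⟨p, hp, -, hpW⟩ := h x hx
      exact ⟨p, hp, fun i hi => by simpa [Nat.le_zero.1 hi] using hpW⟩
    | succ n ih =>
      obtain ⟨x, hx, hxW⟩ := ih
      obtain ⟨p, hp, rfl, hpW⟩ := h x hx
      refine ⟨p, hp, fun i hi => ?_⟩
      cases i with
      | zero => exact hpW
      | succ i => exact hxW i (by omega)
  obtain ⟨p, hp, hpW⟩ := key N
  obtain ⟨n, hn, hnW⟩ := hN p hp
  exact hpW n hn hnW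

theorem subset_image_of_minimal [T2Space X] (hT : Continuous T) (hM : IsCompact M)
    (hinv : MapsTo T M M) (hmin : ∀ p ∈ M, M ⊆ closure (range fun n => T^[n] p)) :
    M ⊆ T '' M := by
  intro x hx
  refine closure_minimal ?_ (hM.image hT).isClosed (hmin (T x) (hinv hx) hx)
  rintro _ ⟨n, rfl⟩
  exact ⟨T^[n] x, hinv.iterate n hx, (Function.iterate_succ_apply' T n x).symm⟩

end Minimal

section MinimalBase

variable {B : Type*} [MetricSpace B] [CompactSpace B] {f : B → B}

theorem surjective_of_minimal (hf : Continuous f)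
    (hfmin : ∀ b : B, Dense (range fun n => f^[n] b)) : Function.Surjective f := by
  intro b
  obtain ⟨a, -, ha⟩ := subset_image_of_minimal hf isCompact_univ (mapsTo_univ _ _)
    (fun p _ => (hfmin p).closure_eq.ge) (mem_univ b)
  exact ⟨a, ha⟩

theorem exists_fibre_subset (hf : Continuous f)
    (hfmin : ∀ b : B, Dense (range fun n => f^[n] b)) {W : Set B} (hW : IsOpen W)
    (hne : W.Nonempty) : ∃ z, ∀ p, f p = z → p ∈ W := by
  obtain ⟨z, -, hz⟩ := exists_fibre_subset_of_minimal hf isCompact_univ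
    (fun p _ => (hfmin p).closure_eq.ge) hW (by simpa using hne)
  exact ⟨z, fun p => hz p (mem_univ p)⟩

/-- Preimages of residual sets under a minimal map are residual. -/
theorem tendsto_residual_of_minimal (hf : Continuous f)
    (hfmin : ∀ b : B, Dense (range fun n => f^[n] b)) :
    Filter.Tendsto f (residual B) (residual B) := by
  intro s hs
  obtain ⟨S, hSo, hSd, hSc, hSs⟩ := mem_residual_iff.1 hs
  have hmem : ⋂ t ∈ S, f ⁻¹' t ∈ residual B := by
    refine (countable_bInter_mem hSc).2 fun t ht =>
      residual_of_dense_open ((hSo t ht).preimage hf) ?_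
    rw [dense_iff_inter_open]
    intro W hW hWne
    obtain ⟨z, hz⟩ := exists_fibre_subset hf hfmin hW hWne
    have hopen : IsOpen (f '' Wᶜ)ᶜ := (hW.isClosed_compl.isCompact.image hf).isClosed.isOpen_compl
    obtain ⟨y, hyW, hyt⟩ := (hSd t ht).inter_open_nonempty _ hopen
      ⟨z, fun ⟨p, hp, hpz⟩ => hp (hz p hpz)⟩
    obtain ⟨x, rfl⟩ := surjective_of_minimal hf hfmin y
    exact ⟨x, by_contra fun hx => hyW ⟨x, hx, rfl⟩, hyt⟩
  refine Filter.mem_map.2 (Filter.mem_of_superset hmem fun x hx => hSs fun t ht => ?_)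
  exact mem_iInter₂.1 hx t ht

/-- A minimal map is almost one-to-one. -/
theorem eventually_residual_fibre_subsingleton (hf : Continuous f)
    (hfmin : ∀ b : B, Dense (range fun n => f^[n] b)) :
    ∀ᶠ a in residual B, ∀ a', f a' = f a → a' = a := by
  have key : ∀ n : ℕ, ∀ᶠ a in residual B, ∀ a', f a' = f a → dist a' a < 1 / ((n : ℝ) + 1) := by
    intro n
    set ε : ℝ := 1 / ((n : ℝ) + 1)
    have hεpos : 0 < ε := Nat.one_div_pos_of_nat
    have hcl : IsClosed {a | ∃ a', f a' = f a ∧ ε ≤ dist a' a} := by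
      have hK : IsClosed {p : B × B | f p.2 = f p.1 ∧ ε ≤ dist p.2 p.1} :=
        (isClosed_eq (hf.comp continuous_snd) (hf.comp continuous_fst)).inter
          (isClosed_le continuous_const (continuous_snd.dist continuous_fst))
      convert isClosedMap_fst_of_compactSpace _ hK using 1
      ext a
      simp
    refine Filter.mem_of_superset (residual_of_dense_open hcl.isOpen_compl ?_) ?_
    · rw [dense_iff_inter_open]
      rintro W hW ⟨x, hx⟩
      obtain ⟨z, hz⟩ := exists_fibre_subset hf hfmin
        (hW.inter (Metric.isOpen_ball (x := x) (ε := ε / 2)))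
        ⟨x, hx, Metric.mem_ball_self (half_pos hεpos)⟩
      obtain ⟨a, rfl⟩ := surjective_of_minimal hf hfmin z
      refine ⟨a, (hz a rfl).1, ?_⟩
      rintro ⟨a', ha', hd⟩
      have h1 := Metric.mem_ball.1 (hz a rfl).2
      have h2 := Metric.mem_ball.1 (hz a' ha').2
      linarith [dist_triangle_right a' a x]
    · intro a ha a' ha'
      by_contra! hd
      exact ha ⟨a', ha', hd⟩
  filter_upwards [eventually_countable_forall.2 key] with a ha a' ha'
  by_contra hne
  obtain ⟨n, hn⟩ := exists_nat_one_div_lt (dist_pos.2 hne)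
  exact (ha n a' ha').not_gt hn

end MinimalBase

/-- In a minimal set of a skew product, over a residual set of base points the fibre map is
irreducible on the interior of the fibre of the minimal set. -/
theorem eventually_residual_exists_fibre_subset {B Y : Type*} [TopologicalSpace B]
    [CompactSpace B] [T2Space B] [TopologicalSpace Y] [CompactSpace Y] [T2Space Y] [SecondCountableTopology Y]
    {f : B → B} {g : B × Y → Y} (hg : Continuous g) {F : B × Y → B × Y} (hFc : Continuous F)
    (hF : ∀ p, F p = (f p.1, g p)) {M : Set (B × Y)} (hM : IsClosed M)
    (hinv : MapsTo F M M) (hmin : ∀ p ∈ M, M ⊆ closure (range fun n => F^[n] p)) :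
    ∀ᶠ a in residual B, ∀ Q : Set Y, IsOpen Q → Q.Nonempty → (∀ y ∈ Q, (a, y) ∈ M) →
      ∃ y ∈ Q, ∀ y', (a, y') ∈ M → g (a, y') = g (a, y) → y' ∈ Q := by
  obtain ⟨𝒬, h𝒬c, h𝒬e, h𝒬⟩ := TopologicalSpace.exists_countable_basis Y
  have key : ∀ Q ∈ 𝒬, ∀ᶠ a in residual B,
      ¬ ∀ y ∈ Q, (a, y) ∈ M ∧ ∃ y', y' ∉ Q ∧ (a, y') ∈ M ∧ g (a, y') = g (a, y) := by
    intro Q hQ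
    have hQo := h𝒬.isOpen hQ
    have hcl : IsClosed {a | ∀ y ∈ Q, (a, y) ∈ M ∧
        ∃ y', y' ∉ Q ∧ (a, y') ∈ M ∧ g (a, y') = g (a, y)} := by
      simp only [ofPred_forall]
      refine isClosed_biInter fun y _ =>
        (hM.preimage (Continuous.prodMk_left y)).inter (?_ : IsClosed {a | ∃ y', _})
      have hK : IsClosed {p : B × Y | p.2 ∉ Q ∧ p ∈ M ∧ g p = g (p.1, y)} :=
        (hQo.isClosed_compl.preimage continuous_snd).inter
          (hM.inter (isClosed_eq hg (by fun_prop)))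
      convert isClosedMap_fst_of_compactSpace _ hK using 1
      ext a
      simp
    refine residual_of_dense_open hcl.isOpen_compl ?_
    change Dense {a | ∀ y ∈ Q, (a, y) ∈ M ∧
      ∃ y', y' ∉ Q ∧ (a, y') ∈ M ∧ g (a, y') = g (a, y)}ᶜ
    rw [← interior_eq_empty_iff_dense_compl, eq_empty_iff_forall_notMem]
    intro a ha
    obtain ⟨y, hy⟩ : Q.Nonempty := nonempty_iff_ne_empty.2 fun h => h𝒬e (h ▸ hQ)
    obtain ⟨z, hzM, hz⟩ := exists_fibre_subset_of_minimal hFc hM.isCompact hmin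
      (isOpen_interior.prod hQo) ⟨(a, y), (interior_subset ha y hy).1, ha, hy⟩
    obtain ⟨p, hp, rfl⟩ := subset_image_of_minimal hFc hM.isCompact hinv hmin hzM
    obtain ⟨hp1, hp2⟩ := hz p hp rfl
    obtain ⟨-, y', hy', hyM, hyg⟩ := interior_subset hp1 p.2 hp2
    refine hy' (hz (p.1, y') hyM ?_).2
    rw [hF, hF, hyg]
  filter_upwards [(eventually_countable_ball h𝒬c).2 key] with a ha Q hQ hne hQM
  obtain ⟨x, hx⟩ := hne
  obtain ⟨Q', hQ', hxQ', hsub⟩ := h𝒬.exists_subset_of_mem_open hx hQ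
  have h := ha Q' hQ'
  push Not at h
  obtain ⟨y, hy, hy'⟩ := h
  refine ⟨y, hsub hy, fun y' hyM hyg => hsub ?_⟩
  by_contra hn
  exact hy' (hQM y (hsub hy)) y' hn hyM hyg

/-- A continuous real function that is irreducible on an interval is open at interior points. -/
theorem image_Icc_mem_nhds_of_irreducible {h : ℝ → ℝ} {l r x : ℝ} (hc : ContinuousOn h (Icc l r))
    (hlx : l < x) (hxr : x < r)
    (hirr : ∀ p q, l ≤ p → p < q → q ≤ r →
      ∃ s ∈ Ioo p q, ∀ t ∈ Icc l r, h t = h s → t ∈ Ioo p q) :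
    h '' Icc l r ∈ 𝓝 (h x) := by
  have hlr := hlx.trans hxr
  have hinj : InjOn h (Icc l r) := by
    have aux : ∀ u ∈ Icc l r, ∀ v ∈ Icc l r, u < v → h u ≠ h v := by
      intro u hu v hv huv heq
      by_cases hconst : ∀ w ∈ Ioo u v, h w = h u
      · obtain ⟨s, hs, hs'⟩ := hirr u v hu.1 huv hv.2
        exact (hs' v hv (by rw [hconst s hs, heq])).2.false
      push Not at hconst
      obtain ⟨w, hw, hne⟩ := hconst
      have hcuw : ContinuousOn h (uIcc u w) := by
        rw [uIcc_of_le hw.1.le]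
        exact hc.mono (Icc_subset_Icc hu.1 (hw.2.le.trans hv.2))
      have hcwv : ContinuousOn h (uIcc w v) := by
        rw [uIcc_of_le hw.2.le]
        exact hc.mono (Icc_subset_Icc (hu.1.trans hw.1.le) hv.2)
      obtain ⟨m, hm, hmeq⟩ : (h u + h w) / 2 ∈ h '' uIcc u w := by
        refine intermediate_value_uIcc hcuw ?_
        rw [mem_uIcc]
        rcases hne.lt_or_gt with h1 | h1
        · right; constructor <;> linarith
        · left; constructor <;> linarith
      rw [uIcc_of_le hw.1.le] at hm
      have hmu : u < m := by
        refine lt_of_le_of_ne hm.1 ?_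
        rintro rfl
        exact hne (by linarith)
      have hmw : m < w := by
        refine lt_of_le_of_ne hm.2 ?_
        rintro rfl
        exact hne (by linarith)
      have hcm : ContinuousAt h m :=
        hc.continuousAt (Icc_mem_nhds (hu.1.trans_lt hmu) (hmw.trans (hw.2.trans_le hv.2)))
      have hnear : ∀ᶠ s in 𝓝 m, s ∈ Ioo u w ∧ |h s - h m| < |h w - h u| / 2 := by
        have hpos : 0 < |h w - h u| / 2 := half_pos (abs_pos.2 (sub_ne_zero.2 hne))
        exact Filter.Eventually.and (Ioo_mem_nhds hmu hmw) (Metric.tendsto_nhds.1 hcm _ hpos)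
      obtain ⟨δ, hδ, hball⟩ := Metric.eventually_nhds_iff_ball.1 hnear
      have hmem : ∀ s ∈ Ioo (m - δ) (m + δ), s ∈ Ioo u w ∧ |h s - h m| < |h w - h u| / 2 := by
        intro s hs
        exact hball s (by rwa [Real.ball_eq_Ioo])
      have hp := (hmem (m - δ / 2) ⟨by linarith, by linarith⟩).1
      have hq := (hmem (m + δ / 2) ⟨by linarith, by linarith⟩).1
      obtain ⟨s, hs, hs'⟩ := hirr (m - δ / 2) (m + δ / 2) (hu.1.trans hp.1.le) (by linarith)
        (hq.2.le.trans (hw.2.le.trans hv.2))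
      have hsv := (hmem s ⟨by linarith [hs.1], by linarith [hs.2]⟩).2
      obtain ⟨t, ht, hteq⟩ : h s ∈ h '' uIcc w v := by
        refine intermediate_value_uIcc hcwv ?_
        rw [← heq, mem_uIcc]
        rw [hmeq, abs_lt] at hsv
        rcases hne.lt_or_gt with h1 | h1
        · rw [abs_of_neg (by linarith)] at hsv
          left; constructor <;> linarith
        · rw [abs_of_pos (by linarith)] at hsv
          right; constructor <;> linarith
      rw [uIcc_of_le hw.2.le] at ht
      have := (hs' t ⟨hu.1.trans (hw.1.le.trans ht.1), ht.2.trans hv.2⟩ hteq).2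
      linarith [hq.2, ht.1]
    intro u hu v hv heq
    rcases lt_trichotomy u v with h1 | h1 | h1
    · exact absurd heq (aux u hu v hv h1)
    · exact h1
    · exact absurd heq.symm (aux v hv u hu h1)
  have hl : l ∈ Icc l r := left_mem_Icc.2 hlr.le
  have hr : r ∈ Icc l r := right_mem_Icc.2 hlr.le
  have hx : x ∈ Icc l r := ⟨hlx.le, hxr.le⟩
  rcases hc.strictMonoOn_of_injOn_Icc' hlr.le hinj with hmono | hanti
  · exact Filter.mem_of_superset (Icc_mem_nhds (hmono hl hx hlx) (hmono hx hr hxr))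
      (intermediate_value_Icc hlr.le hc)
  · exact Filter.mem_of_superset (Icc_mem_nhds (hanti hx hr hxr) (hanti hl hx hlx))
      (intermediate_value_Icc' hlr.le hc)

/-- A continuous circle map that is irreducible on a neighbourhood of a point is open there. -/
theorem AddCircle.image_mem_nhds_of_irreducible {φ : AddCircle (1 : ℝ) → AddCircle (1 : ℝ)}
    (hφ : Continuous φ) {N : Set (AddCircle (1 : ℝ))} {x : AddCircle (1 : ℝ)} (hN : N ∈ 𝓝 x)
    (hirr : ∀ Q : Set (AddCircle (1 : ℝ)), IsOpen Q → Q.Nonempty → Q ⊆ N →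
      ∃ y ∈ Q, ∀ y' ∈ N, φ y' = φ y → y' ∈ Q) :
    φ '' N ∈ 𝓝 (φ x) := by
  obtain ⟨c, rfl⟩ := QuotientAddGroup.mk_surjective x
  obtain ⟨d, hd⟩ := QuotientAddGroup.mk_surjective (φ (c : AddCircle (1 : ℝ)))
  have : Fact ((0 : ℝ) < 1) := ⟨one_pos⟩
  let e := AddCircle.openPartialHomeomorphCoe (1 : ℝ) (d - 1 / 2)
  have hopen : IsOpenMap ((↑) : ℝ → AddCircle (1 : ℝ)) := QuotientAddGroup.isOpenMap_coe
  have hcoe : Continuous ((↑) : ℝ → AddCircle (1 : ℝ)) := AddCircle.continuous_mk' 1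
  have hdt : φ (c : AddCircle (1 : ℝ)) ∈ e.target := by
    have : d ∈ e.source := ⟨by linarith, by linarith⟩
    have h2 := e.map_source this
    have h3 : e d = φ (c : AddCircle (1 : ℝ)) := hd
    rwa [h3] at h2
  have hnear : ∀ᶠ s : ℝ in 𝓝 c, (s : AddCircle (1 : ℝ)) ∈ N ∧
      φ (s : AddCircle (1 : ℝ)) ∈ e.target :=
    (hcoe.continuousAt.eventually_mem hN).and
      ((hφ.comp hcoe).continuousAt.eventually_mem (e.open_target.mem_nhds hdt))
  obtain ⟨δ, hδ, hball⟩ := Metric.eventually_nhds_iff_ball.1 hnear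
  obtain ⟨η, hη, hηδ, hη2⟩ : ∃ η : ℝ, 0 < η ∧ η < δ ∧ η < 1 / 2 := by
    obtain ⟨η, h1, h2⟩ := exists_between (lt_min hδ (one_half_pos (α := ℝ)))
    exact ⟨η, h1, (lt_min_iff.1 h2).1, (lt_min_iff.1 h2).2⟩
  have hI : ∀ s ∈ Icc (c - η) (c + η), (s : AddCircle (1 : ℝ)) ∈ N ∧
      φ (s : AddCircle (1 : ℝ)) ∈ e.target := by
    intro s hs
    refine hball s ?_
    rw [Real.ball_eq_Ioo]
    exact ⟨by linarith [hs.1], by linarith [hs.2]⟩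
  have hcinj : ∀ s ∈ Icc (c - η) (c + η), ∀ t ∈ Icc (c - η) (c + η),
      (s : AddCircle (1 : ℝ)) = t → s = t := by
    intro s hs t ht hst
    exact (AddCircle.coe_eq_coe_iff_of_mem_Ico (p := (1 : ℝ)) (a := c - η)
      ⟨hs.1, by linarith [hs.2]⟩ ⟨ht.1, by linarith [ht.2]⟩).1 hst
  let h : ℝ → ℝ := fun s => e.symm (φ (s : AddCircle (1 : ℝ)))
  have heh : ∀ s ∈ Icc (c - η) (c + η), (h s : AddCircle (1 : ℝ)) = φ (s : AddCircle (1 : ℝ)) :=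
    fun s hs => e.right_inv (hI s hs).2
  have hmem : h '' Icc (c - η) (c + η) ∈ 𝓝 (h c) := by
    refine image_Icc_mem_nhds_of_irreducible ?_ (by linarith) (by linarith) ?_
    · exact e.continuousOn_symm.comp (hφ.comp hcoe).continuousOn fun s hs => (hI s hs).2
    · intro p q hp hpq hq
      have hsub : Ioo p q ⊆ Icc (c - η) (c + η) :=
        fun s hs => ⟨hp.trans hs.1.le, hs.2.le.trans hq⟩
      obtain ⟨_, ⟨s, hs, rfl⟩, hs'⟩ := hirr ((↑) '' Ioo p q) (hopen _ isOpen_Ioo)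
        ((nonempty_Ioo.2 hpq).image _) (by rintro _ ⟨s, hs, rfl⟩; exact (hI s (hsub hs)).1)
      refine ⟨s, hs, fun t ht hts => ?_⟩
      obtain ⟨s', hs'm, hs't⟩ := hs' t (hI t ht).1 (by
        rw [← heh t ht, ← heh s (hsub hs), hts])
      rwa [← hcinj s' (hsub hs'm) t ht hs't]
  have hc : c ∈ Icc (c - η) (c + η) := ⟨by linarith, by linarith⟩
  have := hopen.image_mem_nhds hmem
  rw [heh c hc] at this
  refine Filter.mem_of_superset this ?_
  rintro _ ⟨_, ⟨s, hs, rfl⟩, rfl⟩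
  exact ⟨s, (hI s hs).1, (heh s hs).symm⟩

/-- A minimal set of a fibre-preserving (skew product) continuous map of
`B × S¹` over a minimal base is nowhere dense or the whole space. -/
theorem minimal_set_of_skew_product_on_circle_nowhere_dense_or_all
    {B : Type*} [MetricSpace B] [CompactSpace B] [Nonempty B]
    (f : B → B) (hf : Continuous f)
    (hfmin : ∀ b : B, Dense (Set.range fun n => f^[n] b))
    (g : B × AddCircle (1 : ℝ) → AddCircle (1 : ℝ)) (hg : Continuous g)
    (F : B × AddCircle (1 : ℝ) → B × AddCircle (1 : ℝ)) (hF : ∀ p, F p = (f p.1, g p))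
    (M : Set (B × AddCircle (1 : ℝ))) (hMne : M.Nonempty) (hMcl : IsClosed M)
    (hMinv : Set.MapsTo F M M)
    (hMmin : ∀ p ∈ M, M ⊆ closure (Set.range fun n => F^[n] p)) :
    IsNowhereDense M ∨ M = Set.univ := by
  have : Fact ((0 : ℝ) < 1) := ⟨one_pos⟩
  by_contra! hcon
  obtain ⟨hint, hne⟩ := hcon
  have hint' : (M ∩ interior M).Nonempty := by
    rw [IsNowhereDense, hMcl.closure_eq, ← ne_eq, ← nonempty_iff_ne_empty] at hint
    obtain ⟨p, hp⟩ := hint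
    exact ⟨p, interior_subset hp, hp⟩
  have hFc : Continuous F := by
    rw [funext hF]
    fun_prop
  have hsurj := subset_image_of_minimal hFc hMcl.isCompact hMinv hMmin
  obtain ⟨N, hN⟩ :=
    exists_forall_exists_iterate_mem hFc hMcl.isCompact hMmin isOpen_interior hint'
  set G : B → Prop := fun a => (∀ a', f a' = f a → a' = a) ∧
    ∀ Q : Set (AddCircle (1 : ℝ)), IsOpen Q → Q.Nonempty → (∀ y ∈ Q, (a, y) ∈ M) →
      ∃ y ∈ Q, ∀ y', (a, y') ∈ M → g (a, y') = g (a, y) → y' ∈ Q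
  have hG : ∀ᶠ a in residual B, G a :=
    (eventually_residual_fibre_subsingleton hf hfmin).and
      (eventually_residual_exists_fibre_subset hg hFc hF hMcl hMinv hMmin)
  have hGorb : ∀ᶠ a in residual B, ∀ n : ℕ, G (f^[n] a) := by
    refine eventually_countable_forall.2 fun n => ?_
    exact ((tendsto_residual_of_minimal hf hfmin).iterate n).eventually hG
  have hback : ∀ (k : ℕ) (a : B), (∀ n : ℕ, G (f^[n] a)) → ∀ y, (f^[k] a, y) ∈ M →
      {y | (f^[k] a, y) ∈ M} ∉ 𝓝 y → ∃ x, (a, x) ∈ M ∧ {y | (a, y) ∈ M} ∉ 𝓝 x ∧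
        ∀ i ≤ k, F^[i] (a, x) ∉ interior M := by
    have hslice : ∀ a x, {y | (a, y) ∈ M} ∉ 𝓝 x → (a, x) ∉ interior M := by
      intro a x hx hax
      exact hx ((Continuous.prodMk_right a).continuousAt.preimage_mem_nhds
        (mem_interior_iff_mem_nhds.1 hax))
    intro k
    induction k with
    | zero =>
      intro a _ y hy hy'
      exact ⟨y, hy, hy', fun i hi => by simpa [Nat.le_zero.1 hi] using hslice a y hy'⟩
    | succ k ih =>
      intro a ha y hy hy'
      obtain ⟨w, hwM, hw, hwi⟩ := ih (f a) (fun n => ha (n + 1)) y hy hy'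
      obtain ⟨⟨a', x⟩, hxM, hx⟩ := hsurj hwM
      rw [hF, Prod.mk.injEq] at hx
      obtain ⟨h1, h2⟩ := hx
      obtain rfl : a' = a := (ha 0).1 a' h1
      have hxn : {y | (a', y) ∈ M} ∉ 𝓝 x := by
        intro hxn
        have hopen := AddCircle.image_mem_nhds_of_irreducible (φ := fun y => g (a', y))
          (by fun_prop) hxn (ha 0).2
        simp only [h2] at hopen
        refine hw (Filter.mem_of_superset hopen ?_)
        rintro _ ⟨y, hy, rfl⟩
        have := hMinv hy
        rwa [hF] at this
      refine ⟨x, hxM, hxn, fun i hi => ?_⟩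
      cases i with
      | zero => exact hslice a' x hxn
      | succ i =>
        rw [Function.iterate_succ_apply, hF, h2]
        exact hwi i (by omega)
  obtain ⟨⟨b₀, y₀⟩, hby⟩ := (ne_univ_iff_exists_notMem M).1 hne
  have hV : IsOpen {b | (b, y₀) ∉ M} :=
    hMcl.isOpen_compl.preimage (Continuous.prodMk_left y₀)
  have hVne : (f^[N] ⁻¹' {b | (b, y₀) ∉ M}).Nonempty := by
    obtain ⟨a, ha⟩ := (surjective_of_minimal hf hfmin).iterate N b₀
    exact ⟨a, by simpa [ha] using hby⟩
  obtain ⟨a, haV, haG⟩ := (dense_of_mem_residual hGorb).inter_open_nonempty _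
    (hV.preimage (hf.iterate N)) hVne
  have hproj : ∀ b, ∃ y, (b, y) ∈ M := by
    obtain ⟨p, hp⟩ := hMne
    have hcl : IsClosed (Prod.fst '' M) := isClosedMap_fst_of_compactSpace _ hMcl
    intro b
    have hb : b ∈ Prod.fst '' M := by
      refine closure_minimal ?_ hcl (hfmin p.1 b)
      rintro _ ⟨n, rfl⟩
      have hsemi : Function.Semiconj Prod.fst F f := fun q => by rw [hF]
      exact ⟨F^[n] p, hMinv.iterate n hp, hsemi.iterate_right n p⟩
    obtain ⟨⟨_, y⟩, hq, rfl⟩ := hb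
    exact ⟨y, hq⟩
  obtain ⟨y, hy⟩ : (frontier {y | (f^[N] a, y) ∈ M}).Nonempty :=
    nonempty_frontier_iff.2 ⟨hproj _, fun h => haV (h.ge (mem_univ y₀))⟩
  have hslcl : IsClosed {y | (f^[N] a, y) ∈ M} := hMcl.preimage (Continuous.prodMk_right _)
  rw [hslcl.frontier_eq] at hy
  obtain ⟨x, hxM, -, hx⟩ := hback N a haG y hy.1 fun h => hy.2 (mem_interior_iff_mem_nhds.2 h)
  obtain ⟨n, hn, hnO⟩ := hN (a, x) hxM
  exact hx n hn hnO
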